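/- Let μ be a deficient topological measure on a locally compact Hausdorff space X with μ(X) < ∞. Let (f_α) be an increasing net of bounded continuous real-valued functions converging uniformly to a bounded continuous function f, with f_α(X) ⊆ [a,b] and f(X) ⊆ [a,b] for all α. Then ∫_X f_α dμ → ∫_X f dμ; that is, the net ∫_a^b μ(f_α⁻¹((t,∞))) dt converges to ∫_a^b μ(f⁻¹((t,∞))) dt. -/

import Mathlib

open MeasureTheory Set Filter Topology ENNReal

/-- A deficient topological measure on a topological space `X`: a set function with values in
`[0,∞]` (recorded on all sets, but constrained only on open and closed sets) that is finitely
additive on disjoint compact sets, inner regular on open sets with respect to compact sets,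
and outer regular on closed sets with respect to open sets. -/
structure DeficientTopologicalMeasure (X : Type*) [TopologicalSpace X] where
  m : Set X → ℝ≥0∞
  additive : ∀ ⦃C K : Set X⦄, IsCompact C → IsCompact K → Disjoint C K →
    m (C ∪ K) = m C + m K
  innerRegular : ∀ ⦃U : Set X⦄, IsOpen U →
    m U = ⨆ (K : Set X) (_ : IsCompact K) (_ : K ⊆ U), m K
  outerRegular : ∀ ⦃F : Set X⦄, IsClosed F →
    m F = ⨅ (U : Set X) (_ : IsOpen U) (_ : F ⊆ U), m U

/-!
Uniformly close functions have interleaved distribution functions: `f ≤ g + ε` gives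
`{f > t + ε} ⊆ {g > t}`. Translating a decreasing function by `ε` changes its integral over `[a, b]`
by at most `ε` times its drop, which is at most `μ(X)`. So the quasi-integral is `μ(X)`-Lipschitz
for the supremum norm.
-/

theorem integral_le_integral_comp_add_right_add_of_antitone {F : ℝ → ℝ} (hF : Antitone F)
    (a b : ℝ) {ε : ℝ} (hε : 0 ≤ ε) :
    ∫ t in a..b, F t ≤ (∫ t in a..b, F (t + ε)) + ε * (F a - F (b + ε)) := by
  have hFint (c d : ℝ) : IntervalIntegrable F volume c d := hF.intervalIntegrable
  have hdiff : (∫ t in a..b, F t) - ∫ t in a..b, F (t + ε) =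
      (∫ t in a..a + ε, F t) - ∫ t in b..b + ε, F t := by
    rw [intervalIntegral.integral_comp_add_right]
    exact intervalIntegral.integral_interval_sub_interval_comm (hFint _ _) (hFint _ _) (hFint _ _)
  have hleft : ∫ t in a..a + ε, F t ≤ ε * F a := by
    simpa using intervalIntegral.integral_mono_on (le_add_of_nonneg_right hε) (hFint _ _)
      intervalIntegrable_const fun t ht => hF ht.1
  have hright : ε * F (b + ε) ≤ ∫ t in b..b + ε, F t := by
    simpa using intervalIntegral.integral_mono_on (le_add_of_nonneg_right hε)
      intervalIntegrable_const (hFint _ _) fun t ht => hF ht.2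
  linarith

namespace DeficientTopologicalMeasure

variable {X : Type*} [TopologicalSpace X] (μ : DeficientTopologicalMeasure X)

theorem mono_of_isOpen {U V : Set X} (hU : IsOpen U) (hV : IsOpen V) (hUV : U ⊆ V) :
    μ.m U ≤ μ.m V := by
  rw [μ.innerRegular hU, μ.innerRegular hV]
  exact iSup₂_mono fun K _ => iSup_const_mono fun hKU => hKU.trans hUV

/-- The distribution function `t ↦ μ(f⁻¹((t,∞)))` of `f`, whose integral over an interval
containing the range of `f` is the variable part of the quasi-integral. It takes real values, with
`∞` sent to `0`, so it is meaningful only where the superlevel sets have finite measure. -/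
noncomputable def distFun (f : X → ℝ) (t : ℝ) : ℝ := (μ.m (f ⁻¹' Ioi t)).toReal

variable {μ} {f g : X → ℝ} {ε : ℝ}

theorem distFun_nonneg (t : ℝ) : 0 ≤ μ.distFun f t := ENNReal.toReal_nonneg

theorem distFun_le_toReal_univ (hμ : μ.m univ ≠ ∞) (hf : Continuous f) (t : ℝ) :
    μ.distFun f t ≤ (μ.m univ).toReal :=
  ENNReal.toReal_mono hμ
    (μ.mono_of_isOpen (isOpen_Ioi.preimage hf) isOpen_univ (subset_univ _))

theorem distFun_le_distFun_of_preimage_subset (hμ : μ.m univ ≠ ∞) (hf : Continuous f)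
    (hg : Continuous g) {s t : ℝ} (hst : f ⁻¹' Ioi s ⊆ g ⁻¹' Ioi t) :
    μ.distFun f s ≤ μ.distFun g t := by
  have hgt : IsOpen (g ⁻¹' Ioi t) := isOpen_Ioi.preimage hg
  have hfin : μ.m (g ⁻¹' Ioi t) ≠ ∞ :=
    ne_top_of_le_ne_top hμ (μ.mono_of_isOpen hgt isOpen_univ (subset_univ _))
  exact ENNReal.toReal_mono hfin (μ.mono_of_isOpen (isOpen_Ioi.preimage hf) hgt hst)

theorem antitone_distFun (hμ : μ.m univ ≠ ∞) (hf : Continuous f) : Antitone (μ.distFun f) :=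
  fun _ _ hst =>
    distFun_le_distFun_of_preimage_subset hμ hf hf (preimage_mono (Ioi_subset_Ioi hst))

theorem distFun_add_le_distFun (hμ : μ.m univ ≠ ∞) (hf : Continuous f) (hg : Continuous g)
    (hfg : ∀ x, f x ≤ g x + ε) (t : ℝ) : μ.distFun f (t + ε) ≤ μ.distFun g t :=
  distFun_le_distFun_of_preimage_subset hμ hf hg fun x (hx : t + ε < f x) =>
    lt_of_add_lt_add_right (hx.trans_le (hfg x))

theorem integral_distFun_le_add (hμ : μ.m univ ≠ ∞) (hf : Continuous f) (hg : Continuous g)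
    (hε : 0 ≤ ε) (hfg : ∀ x, f x ≤ g x + ε) {a b : ℝ} (hab : a ≤ b) :
    ∫ t in a..b, μ.distFun f t ≤ (∫ t in a..b, μ.distFun g t) + ε * (μ.m univ).toReal := by
  have hF := antitone_distFun hμ hf
  have hshift : ∫ t in a..b, μ.distFun f (t + ε) ≤ ∫ t in a..b, μ.distFun g t :=
    intervalIntegral.integral_mono_on hab
      (hF.comp_monotone (monotone_id.add_const ε)).intervalIntegrable
      (antitone_distFun hμ hg).intervalIntegrable fun t _ => distFun_add_le_distFun hμ hf hg hfg t
  have hdrop : μ.distFun f a - μ.distFun f (b + ε) ≤ (μ.m univ).toReal :=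
    (sub_le_self _ (distFun_nonneg _)).trans (distFun_le_toReal_univ hμ hf a)
  calc ∫ t in a..b, μ.distFun f t
    _ ≤ (∫ t in a..b, μ.distFun f (t + ε)) + ε * (μ.distFun f a - μ.distFun f (b + ε)) :=
      integral_le_integral_comp_add_right_add_of_antitone hF a b hε
    _ ≤ (∫ t in a..b, μ.distFun g t) + ε * (μ.m univ).toReal := by gcongr

theorem dist_integral_distFun_le (hμ : μ.m univ ≠ ∞) (hf : Continuous f) (hg : Continuous g)
    (hε : 0 ≤ ε) (hfg : ∀ x, dist (f x) (g x) ≤ ε) (a b : ℝ) :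
    dist (∫ t in a..b, μ.distFun f t) (∫ t in a..b, μ.distFun g t) ≤
      ε * (μ.m univ).toReal := by
  wlog hab : a ≤ b generalizing a b
  · rw [intervalIntegral.integral_symm b a, intervalIntegral.integral_symm b a, dist_neg_neg]
    exact this b a (le_of_not_ge hab)
  have hfg' (x : X) : f x ≤ g x + ε := by linarith [(abs_le.mp (hfg x)).2]
  have hgf (x : X) : g x ≤ f x + ε := by linarith [(abs_le.mp (hfg x)).1]
  rw [Real.dist_eq, abs_sub_le_iff, sub_le_iff_le_add', sub_le_iff_le_add']
  exact ⟨integral_distFun_le_add hμ hf hg hε hfg' hab,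
    integral_distFun_le_add hμ hg hf hε hgf hab⟩

end DeficientTopologicalMeasure

theorem stmt17_general {X ι : Type*} [TopologicalSpace X] (μ : DeficientTopologicalMeasure X)
    (hμ : μ.m univ ≠ ∞) (a b : ℝ) {l : Filter ι} {f : ι → X → ℝ} {f₀ : X → ℝ}
    (hf : ∀ᶠ α in l, Continuous (f α)) (hlim : TendstoUniformly f f₀ l) :
    Tendsto (fun α => ∫ t in a..b, (μ.m (f α ⁻¹' Ioi t)).toReal) l
      (𝓝 (∫ t in a..b, (μ.m (f₀ ⁻¹' Ioi t)).toReal)) := by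
  rcases l.eq_or_neBot with rfl | _
  · exact tendsto_bot
  have hf₀ : Continuous f₀ := hlim.continuous hf.frequently
  refine Metric.tendsto_nhds.mpr fun δ hδ => ?_
  obtain ⟨ε, hε, hεδ⟩ := exists_pos_mul_lt hδ (μ.m univ).toReal
  filter_upwards [hf, Metric.tendstoUniformly_iff.mp hlim ε hε] with α hfα hα
  have hclose (x : X) : dist (f α x) (f₀ x) ≤ ε := (dist_comm _ _).trans_le (hα x).le
  calc dist (∫ t in a..b, μ.distFun (f α) t) (∫ t in a..b, μ.distFun f₀ t)
    _ ≤ ε * (μ.m univ).toReal :=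
      DeficientTopologicalMeasure.dist_integral_distFun_le hμ hfα hf₀ hε.le hclose a b
    _ < δ := by rwa [mul_comm]

/-- Let `μ` be a finite deficient topological measure on a locally compact
Hausdorff space, and `(f_α)` an increasing net of bounded continuous functions converging
uniformly to a bounded continuous `f`, all with ranges in `[a,b]`. Then
`∫_a^b μ(f_α⁻¹((t,∞))) dt → ∫_a^b μ(f⁻¹((t,∞))) dt`, i.e. `∫_X f_α dμ → ∫_X f dμ`. -/
theorem stmt17 {X : Type*} [TopologicalSpace X] [LocallyCompactSpace X] [T2Space X]
    {ι : Type*} [Preorder ι] [IsDirected ι (· ≤ ·)] [Nonempty ι]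
    (μ : DeficientTopologicalMeasure X) (hμfin : μ.m univ < ∞)
    (a b : ℝ) (f : ι → X → ℝ) (f₀ : X → ℝ)
    (hfc : ∀ α, Continuous (f α)) (hf₀c : Continuous f₀)
    (hfab : ∀ α, ∀ x, f α x ∈ Icc a b) (hf₀ab : ∀ x, f₀ x ∈ Icc a b)
    (hmono : ∀ ⦃α β : ι⦄, α ≤ β → ∀ x, f α x ≤ f β x)
    (hunif : TendstoUniformly f f₀ atTop) :
    Tendsto (fun α => ∫ t in a..b, (μ.m (f α ⁻¹' (Ioi t))).toReal) atTop
      (nhds (∫ t in a..b, (μ.m (f₀ ⁻¹' (Ioi t))).toReal)) :=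
  stmt17_general μ hμfin.ne a b (.of_forall hfc) hunif
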